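/- Let n, N ∈ ℕ, let f be a real polynomial in n variables, and for each u = 1, …, N let P_{1,u}, …, P_{m_u,u} and Q_{1,u}, …, Q_{l_u,u} be real polynomials in n variables; set S = ⋃_{u=1}^{N} {x ∈ ℝⁿ : P_{i,u}(x) > 0 for all i, and Q_{k,u}(x) = 0 for all k}. Then there exist w ∈ ℕ and, for each j = 1, …, w, finite families of univariate real polynomials g_{1,j}, …, g_{v_j,j} and h_{1,j}, …, h_{k_j,j} such that the closure of the image f(S) = {f(x) : x ∈ S} in ℝ equals ⋃_{j=1}^{w} {t ∈ ℝ : g_{1,j}(t) ≥ 0, …, g_{v_j,j}(t) ≥ 0, h_{1,j}(t) = ⋯ = h_{k_j,j}(t) = 0}, where each g_{i,j} is squarefree and, for each j, any two distinct polynomials among g_{1,j}, …, g_{v_j,j} have no common complex root. -/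

import Mathlib

open Polynomial

/-- A real univariate polynomial has only simple (complex) roots: it is nonzero and
every complex root has multiplicity at most one. -/
def HasOnlySimpleComplexRoots (p : Polynomial ℝ) : Prop :=
  p ≠ 0 ∧ ∀ a : ℂ, (p.map (algebraMap ℝ ℂ)).rootMultiplicity a ≤ 1

/-- Two real univariate polynomials have a common complex root. -/
def HasCommonComplexRoot (p q : Polynomial ℝ) : Prop :=
  ∃ a : ℂ, Polynomial.aeval a p = 0 ∧ Polynomial.aeval a q = 0

lemma exists_bump (a b x x' : ℝ) (hax : a < x) (hxb : x < b) (hax' : a < x') (hxb' : x' < b) :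
    ∃ ρ : ℝ ≃o ℝ, ρ x = x' ∧ (∀ t, t ≤ a → ρ t = t) ∧ (∀ t, b ≤ t → ρ t = t) := by
  have key : ∀ x x' : ℝ, a < x → x < b → a < x' → x' < b →
    ∃ f : ℝ → ℝ, (f = fun t => if t ≤ a then t else if t ≤ x then a + (t - a) * ((x' - a) / (x - a))
      else if t ≤ b then b - (b - t) * ((b - x') / (b - x)) else t) ∧
      StrictMono f := by
    intro x x' h1 h2 h3 h4
    refine ⟨_, rfl, ?_⟩
    have k1 : 0 < (x' - a) / (x - a) := div_pos (by linarith) (by linarith)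
    have k2 : 0 < (b - x') / (b - x) := div_pos (by linarith) (by linarith)
    have e1 : (x - a) * ((x' - a) / (x - a)) = x' - a := by
      field_simp [(by linarith : x - a ≠ 0)]
    have e2 : (b - x) * ((b - x') / (b - x)) = b - x' := by
      field_simp [(by linarith : b - x ≠ 0)]
    generalize (x' - a) / (x - a) = r at *
    generalize (b - x') / (b - x) = s at *
    intro t t' htt
    dsimp only
    split_ifs <;> nlinarith
  obtain ⟨f, hf, hfm⟩ := key x x' hax hxb hax' hxb'
  obtain ⟨g, hg, hgm⟩ := key x' x hax' hxb' hax hxb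
  have n1 : x - a ≠ 0 := by linarith
  have n2 : x' - a ≠ 0 := by linarith
  have n3 : b - x ≠ 0 := by linarith
  have n4 : b - x' ≠ 0 := by linarith
  have hfg : Function.RightInverse g f := by
    intro t
    by_cases c1 : t ≤ a
    · simp [hf, hg, c1]
    by_cases c2 : t ≤ x'
    · have : g t = a + (t - a) * ((x - a) / (x' - a)) := by simp [hg, c1, c2]
      have i1 : a < g t := by
        rw [this]
        have := mul_pos (sub_pos.2 (not_le.1 c1)) (div_pos (sub_pos.2 hax) (sub_pos.2 hax'))
        linarith
      have i2 : g t ≤ x := by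
        have h := hgm.monotone c2
        have : g x' = x := by
          simp [hg, not_le.2 hax']; field_simp; ring
        linarith
      simp only [hf, not_le.2 i1, i2, if_true, if_false]
      rw [this]; field_simp; ring
    by_cases c3 : t ≤ b
    · have : g t = b - (b - t) * ((b - x) / (b - x')) := by simp [hg, c1, c2, c3]
      have i2 : x < g t := by
        have h := hgm (not_le.1 c2)
        have : g x' = x := by
          simp [hg, not_le.2 hax']; field_simp; ring
        linarith
      have i3 : g t ≤ b := by
        rw [this]
        have := mul_nonneg (sub_nonneg.2 c3) (div_pos (sub_pos.2 hxb) (sub_pos.2 hxb')).le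
        linarith
      simp only [hf, not_le.2 i2, not_le.2 (hax.trans i2), i3, if_true, if_false]
      rw [this]; field_simp; ring
    · have : g t = t := by simp [hg, c1, c2, c3]
      rw [this]
      have : ¬ t ≤ x := by linarith
      simp [hf, c1, c3, this]
  refine ⟨hfm.orderIsoOfRightInverse f g hfg, ?_, ?_, ?_⟩
  · simp [hf, not_le.2 hax]; field_simp; ring
  · intro t ht
    simp [hf, ht]
  · intro t ht
    rcases ht.eq_or_lt with rfl | ht
    · simp [hf, not_le.2 hxb, not_le.2 (hax.trans hxb)]
    · have h1 : ¬ t ≤ a := by linarith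
      have h2 : ¬ t ≤ x := by linarith
      simp [hf, h1, h2, not_le.2 ht]

/-- sign constancy without roots -/
lemma sign_const (q : ℝ[X]) (x y : ℝ) (h : ∀ z ∈ Set.uIcc x y, q.eval z ≠ 0) :
    SignType.sign (q.eval x) = SignType.sign (q.eval y) := by
  by_contra hne
  have hc : ContinuousOn (fun t => q.eval t) (Set.uIcc x y) := q.continuous.continuousOn
  have hx := h x Set.left_mem_uIcc
  have hy := h y Set.right_mem_uIcc
  have : (0:ℝ) ∈ Set.uIcc (q.eval x) (q.eval y) := by
    rcases lt_or_gt_of_ne hx with hx | hx <;> rcases lt_or_gt_of_ne hy with hy | hy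
    · simp [sign_neg hx, sign_neg hy] at hne
    · exact Set.mem_uIcc.2 (Or.inl ⟨hx.le, hy.le⟩)
    · exact Set.mem_uIcc.2 (Or.inr ⟨hy.le, hx.le⟩)
    · simp [sign_pos hx, sign_pos hy] at hne
  obtain ⟨z, hz, hz0⟩ := intermediate_value_uIcc hc this
  exact h z hz hz0

lemma poly_strictMonoOn (p : ℝ[X]) (u v : ℝ) (h : ∀ y ∈ Set.Ioo u v, 0 < p.derivative.eval y) :
    StrictMonoOn (fun t => p.eval t) (Set.Icc u v) := by
  apply strictMonoOn_of_deriv_pos (convex_Icc u v) p.continuous.continuousOn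
  intro x hx
  rw [interior_Icc] at hx
  simpa using h x hx

/-- One-gap lemma, increasing case. -/
lemma gap_pos (p p' : ℝ[X]) (θ : ℝ ≃o ℝ) (u v : ℝ) (huv : u < v)
    (hd : ∀ y ∈ Set.Ioo u v, 0 < p.derivative.eval y)
    (hd' : ∀ y ∈ Set.Ioo u v, 0 < p'.derivative.eval (θ y))
    (hu : SignType.sign (p.eval u) = SignType.sign (p'.eval (θ u)))
    (hv : SignType.sign (p.eval v) = SignType.sign (p'.eval (θ v))) :
    ∃ θ' : ℝ ≃o ℝ, (∀ y, y ≤ u → θ' y = θ y) ∧ (∀ y, v ≤ y → θ' y = θ y) ∧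
      ∀ y ∈ Set.Ioo u v, SignType.sign (p.eval y) = SignType.sign (p'.eval (θ' y)) := by
  have m := poly_strictMonoOn p u v hd
  have m' : StrictMonoOn (fun t => p'.eval t) (Set.Icc (θ u) (θ v)) := by
    apply poly_strictMonoOn
    intro y hy
    have := hd' (θ.symm y) ⟨by rw [θ.lt_symm_apply]; exact hy.1, by rw [θ.symm_apply_lt]; exact hy.2⟩
    simpa using this
  have hθ : θ u < θ v := θ.strictMono huv
  have ul : u ∈ Set.Icc u v := ⟨le_rfl, huv.le⟩
  have vl : v ∈ Set.Icc u v := ⟨huv.le, le_rfl⟩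
  have ul' : θ u ∈ Set.Icc (θ u) (θ v) := ⟨le_rfl, hθ.le⟩
  have vl' : θ v ∈ Set.Icc (θ u) (θ v) := ⟨hθ.le, le_rfl⟩
  by_cases c1 : 0 ≤ p.eval u
  · have c1' : 0 ≤ p'.eval (θ u) := by rwa [← sign_nonneg_iff, ← hu, sign_nonneg_iff]
    refine ⟨θ, fun _ _ => rfl, fun _ _ => rfl, fun y hy => ?_⟩
    have h1 : p.eval u < p.eval y := m ul (Set.Ioo_subset_Icc_self hy) hy.1
    have h2 : p'.eval (θ u) < p'.eval (θ y) :=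
      m' ul' ⟨(θ.strictMono hy.1).le, (θ.strictMono hy.2).le⟩ (θ.strictMono hy.1)
    rw [sign_pos (c1.trans_lt h1), sign_pos (c1'.trans_lt h2)]
  by_cases c2 : p.eval v ≤ 0
  · have c2' : p'.eval (θ v) ≤ 0 := by rwa [← sign_nonpos_iff, ← hv, sign_nonpos_iff]
    refine ⟨θ, fun _ _ => rfl, fun _ _ => rfl, fun y hy => ?_⟩
    have h1 : p.eval y < p.eval v := m (Set.Ioo_subset_Icc_self hy) vl hy.2
    have h2 : p'.eval (θ y) < p'.eval (θ v) :=
      m' ⟨(θ.strictMono hy.1).le, (θ.strictMono hy.2).le⟩ vl' (θ.strictMono hy.2)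
    rw [sign_neg (h1.trans_le c2), sign_neg (h2.trans_le c2')]
  push Not at c1 c2
  have c1' : p'.eval (θ u) < 0 := by
    rwa [← sign_eq_neg_one_iff, ← hu, sign_eq_neg_one_iff]
  have c2' : 0 < p'.eval (θ v) := by
    rwa [← sign_eq_one_iff, ← hv, sign_eq_one_iff]
  obtain ⟨c, hc, hc0⟩ := intermediate_value_Ioo huv.le p.continuous.continuousOn
    (show (0:ℝ) ∈ Set.Ioo _ _ from ⟨c1, c2⟩)
  obtain ⟨d, hd, hd0⟩ := intermediate_value_Ioo hθ.le p'.continuous.continuousOn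
    (show (0:ℝ) ∈ Set.Ioo _ _ from ⟨c1', c2'⟩)
  obtain ⟨ρ, r1, r2, r3⟩ := exists_bump (θ u) (θ v) (θ c) d (θ.strictMono hc.1)
    (θ.strictMono hc.2) hd.1 hd.2
  refine ⟨θ.trans ρ, fun y hy => r2 _ (θ.monotone hy), fun y hy => r3 _ (θ.monotone hy), ?_⟩
  have eu : (θ.trans ρ) u = θ u := r2 _ le_rfl
  have ev : (θ.trans ρ) v = θ v := r3 _ le_rfl
  have ec : (θ.trans ρ) c = d := r1
  generalize θ.trans ρ = η at *
  intro y hy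
  have hym : η y ∈ Set.Icc (θ u) (θ v) := by
    rw [← eu, ← ev]; exact ⟨η.monotone hy.1.le, η.monotone hy.2.le⟩
  have hcm := Set.Ioo_subset_Icc_self hc
  have hdm := Set.Ioo_subset_Icc_self hd
  have hyc := Set.Ioo_subset_Icc_self hy
  dsimp only at hc0 hd0
  rcases lt_trichotomy y c with h | h | h
  · have h1 : p.eval y < p.eval c := m hyc hcm h
    have h2 : p'.eval (η y) < p'.eval d := m' hym hdm (ec ▸ η.strictMono h)
    rw [sign_neg (hc0 ▸ h1), sign_neg (hd0 ▸ h2)]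
  · rw [h, ec, hc0, hd0]
  · have h1 : p.eval c < p.eval y := m hcm hyc h
    have h2 : p'.eval d < p'.eval (η y) := m' hdm hym (ec ▸ η.strictMono h)
    rw [sign_pos (hc0 ▸ h1), sign_pos (hd0 ▸ h2)]

lemma gap_any (p p' : ℝ[X]) (θ : ℝ ≃o ℝ) (u v : ℝ) (huv : u < v)
    (h0 : ∀ y ∈ Set.Ioo u v, p.derivative.eval y ≠ 0)
    (hd : ∀ y, SignType.sign (p.derivative.eval y) = SignType.sign (p'.derivative.eval (θ y)))
    (hu : SignType.sign (p.eval u) = SignType.sign (p'.eval (θ u)))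
    (hv : SignType.sign (p.eval v) = SignType.sign (p'.eval (θ v))) :
    ∃ θ' : ℝ ≃o ℝ, (∀ y, y ≤ u → θ' y = θ y) ∧ (∀ y, v ≤ y → θ' y = θ y) ∧
      ∀ y ∈ Set.Ioo u v, SignType.sign (p.eval y) = SignType.sign (p'.eval (θ' y)) := by
  obtain ⟨m, hm⟩ : ∃ m, m ∈ Set.Ioo u v := Set.nonempty_Ioo.2 huv
  have hs : ∀ y ∈ Set.Ioo u v,
      SignType.sign (p.derivative.eval y) = SignType.sign (p.derivative.eval m) := by
    intro y hy
    apply sign_const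
    intro z hz
    exact h0 z (Set.ordConnected_Ioo.uIcc_subset hy hm hz)
  rcases lt_or_gt_of_ne (h0 m hm) with h | h
  · have hneg : ∀ y ∈ Set.Ioo u v, p.derivative.eval y < 0 := by
      intro y hy
      rw [← sign_eq_neg_one_iff, hs y hy, sign_eq_neg_one_iff]; exact h
    obtain ⟨θ', h1, h2, h3⟩ := gap_pos (-p) (-p') θ u v huv
      (by intro y hy; simpa using hneg y hy)
      (by
        intro y hy
        have := hneg y hy
        rw [← sign_eq_neg_one_iff, hd, sign_eq_neg_one_iff] at this
        simpa using this)
      (by simpa [Left.sign_neg] using hu) (by simpa [Left.sign_neg] using hv)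
    refine ⟨θ', h1, h2, fun y hy => ?_⟩
    simpa [Left.sign_neg] using h3 y hy
  · have hpos : ∀ y ∈ Set.Ioo u v, 0 < p.derivative.eval y := by
      intro y hy
      rw [← sign_eq_one_iff, hs y hy, sign_eq_one_iff]; exact h
    apply gap_pos p p' θ u v huv hpos _ hu hv
    intro y hy
    have := hpos y hy
    rwa [← sign_eq_one_iff, hd, sign_eq_one_iff] at this

lemma extend_iso (T : Set (ℝ[X] × ℝ[X])) (hTf : T.Finite) (hT : ∀ q ∈ T, q.1 ≠ 0)
    (p p' : ℝ[X]) (hder : (p.derivative, p'.derivative) ∈ T) (θ : ℝ ≃o ℝ)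
    (hθ : ∀ q ∈ T, ∀ y, SignType.sign (q.1.eval y) = SignType.sign (q.2.eval (θ y)))
    (hz : ∀ q ∈ T, ∀ y, q.1.eval y = 0 →
      SignType.sign (p.eval y) = SignType.sign (p'.eval (θ y)))
    (htop : ∀ᶠ y in Filter.atTop, SignType.sign (p.eval y) = SignType.sign (p'.eval (θ y)))
    (hbot : ∀ᶠ y in Filter.atBot, SignType.sign (p.eval y) = SignType.sign (p'.eval (θ y))) :
    ∃ θ' : ℝ ≃o ℝ,
      (∀ q ∈ T, ∀ y, SignType.sign (q.1.eval y) = SignType.sign (q.2.eval (θ' y))) ∧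
      ∀ y, SignType.sign (p.eval y) = SignType.sign (p'.eval (θ' y)) := by
  classical
  obtain ⟨b, hb⟩ := Filter.eventually_atTop.1 htop
  obtain ⟨a, ha⟩ := Filter.eventually_atBot.1 hbot
  obtain ⟨a, ha, hab⟩ : ∃ a', (∀ y ≤ a', SignType.sign (p.eval y) =
      SignType.sign (p'.eval (θ y))) ∧ a' ≤ b :=
    ⟨min a b, fun y hy => ha y (hy.trans (min_le_left _ _)), min_le_right _ _⟩
  obtain ⟨Z, hZ⟩ : ∃ Z : Finset ℝ, ∀ y, y ∈ Z ↔ (y = a ∨ y = b ∨ ∃ q ∈ T, q.1.eval y = 0) := by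
    refine ⟨{a, b} ∪ hTf.toFinset.biUnion fun q => q.1.roots.toFinset, fun y => ?_⟩
    simp only [Finset.mem_union, Finset.mem_insert, Finset.mem_singleton, Finset.mem_biUnion,
      Set.Finite.mem_toFinset, Multiset.mem_toFinset, or_assoc]
    refine or_congr Iff.rfl (or_congr Iff.rfl (exists_congr fun q => and_congr_right fun hq => ?_))
    rw [mem_roots (hT q hq)]; rfl
  have hpZ : ∀ y ∈ Z, SignType.sign (p.eval y) = SignType.sign (p'.eval (θ y)) := by
    intro y hy
    rcases (hZ y).1 hy with rfl | rfl | ⟨q, hq, h⟩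
    · exact ha _ le_rfl
    · exact hb _ le_rfl
    · exact hz q hq y h
  have main : ∀ z : Z, z.1 ≤ b → ∃ η : ℝ ≃o ℝ,
      (∀ q ∈ T, ∀ y, SignType.sign (q.1.eval y) = SignType.sign (q.2.eval (η y))) ∧
      (∀ y ∈ Z, η y = θ y) ∧ (∀ y, b ≤ y → η y = θ y) ∧
      (∀ y, y ≤ z.1 → SignType.sign (p.eval y) = SignType.sign (p'.eval (η y))) := by
    intro z
    induction z using WellFoundedLT.induction with
    | ind z ih =>
    intro hzb
    by_cases hza : z.1 ≤ a
    · exact ⟨θ, hθ, fun _ _ => rfl, fun _ _ => rfl, fun y hy => ha y (hy.trans hza)⟩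
    push Not at hza
    have hne : (Z.filter (· < z.1)).Nonempty := ⟨a, by simp [hza, hZ]⟩
    obtain ⟨u, hu, humax⟩ := Finset.exists_max_image _ id hne
    simp only [Finset.mem_filter, id] at hu humax
    have hgap : ∀ y ∈ Set.Ioo u z.1, y ∉ Z := fun y hy hyZ =>
      absurd (humax y ⟨hyZ, hy.2⟩) (not_le.2 hy.1)
    obtain ⟨η, e1, e2, e3, e4⟩ := ih ⟨u, hu.1⟩ hu.2 (hu.2.le.trans hzb)
    obtain ⟨η', f1, f2, f3⟩ := gap_any p p' η u z.1 hu.2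
      (fun y hy h => hgap y hy ((hZ y).2 (Or.inr (Or.inr ⟨_, hder, h⟩))))
      (e1 _ hder) (e4 u le_rfl) (by rw [e2 _ z.2]; exact hpZ _ z.2)
    refine ⟨η', ?_, ?_, ?_, ?_⟩
    · intro q hq y
      rw [e1 q hq y]
      by_cases c1 : y ≤ u
      · rw [f1 y c1]
      by_cases c2 : z.1 ≤ y
      · rw [f2 y c2]
      push Not at c1 c2
      apply sign_const
      have m1 : η y ∈ Set.Ioo (η u) (η z) := ⟨η.strictMono c1, η.strictMono c2⟩
      have m2 : η' y ∈ Set.Ioo (η u) (η z) := by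
        rw [← f1 u le_rfl, ← f2 z le_rfl]; exact ⟨η'.strictMono c1, η'.strictMono c2⟩
      intro w hw hw0
      have m3 := Set.ordConnected_Ioo.uIcc_subset m1 m2 hw
      obtain ⟨w, rfl⟩ := η.surjective w
      have hw1 : q.1.eval w = 0 := by
        rw [← sign_eq_zero_iff, e1 q hq, hw0, sign_zero]
      exact hgap w ⟨η.lt_iff_lt.1 m3.1, η.lt_iff_lt.1 m3.2⟩
        ((hZ w).2 (Or.inr (Or.inr ⟨_, hq, hw1⟩)))
    · intro y hy
      rw [← e2 y hy]
      by_cases c1 : y ≤ u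
      · exact f1 y c1
      · by_cases c2 : z.1 ≤ y
        · exact f2 y c2
        · push Not at c1 c2
          exact absurd hy (hgap y ⟨c1, c2⟩)
    · intro y hy
      rw [f2 y (hzb.trans hy), e3 y hy]
    · intro y hy
      by_cases c1 : y ≤ u
      · rw [f1 y c1]; exact e4 y c1
      rcases hy.eq_or_lt with rfl | hy
      · rw [f2 _ le_rfl, e2 _ z.2]; exact hpZ _ z.2
      · exact f3 y ⟨not_le.1 c1, hy⟩
  obtain ⟨η, e1, e2, e3, e4⟩ := main ⟨b, (hZ b).2 (Or.inr (Or.inl rfl))⟩ le_rfl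
  refine ⟨η, e1, fun y => ?_⟩
  rcases le_total y b with h | h
  · exact e4 y h
  · rw [e3 y h]; exact hb y h

lemma sign_top (p : ℝ[X]) (hp : p ≠ 0) :
    ∀ᶠ y in Filter.atTop, SignType.sign (p.eval y) = SignType.sign p.leadingCoeff := by
  have pos : ∀ p : ℝ[X], 0 < p.leadingCoeff →
      ∀ᶠ y in Filter.atTop, 0 < p.eval y := by
    intro p hp
    by_cases hd : 0 < p.degree
    · exact (p.tendsto_atTop_of_leadingCoeff_nonneg hd hp.le).eventually_gt_atTop 0
    · rw [eq_C_of_degree_le_zero (not_lt.1 hd)] at hp ⊢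
      simp only [leadingCoeff_C] at hp
      exact Filter.Eventually.of_forall fun y => by simpa using hp
  rcases lt_or_gt_of_ne (leadingCoeff_ne_zero.2 hp) with h | h
  · filter_upwards [pos (-p) (by simpa using h)] with y hy
    rw [sign_neg h, sign_neg (by simpa using hy)]
  · filter_upwards [pos p h] with y hy
    rw [sign_pos h, sign_pos hy]

lemma sign_bot (p : ℝ[X]) (hp : p ≠ 0) :
    ∀ᶠ y in Filter.atBot, SignType.sign (p.eval y) =
      SignType.sign ((-1) ^ p.natDegree * p.leadingCoeff) := by
  have h := sign_top (p.comp (-X)) (by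
    intro h
    apply hp
    have := congrArg (fun q => q.comp (-X)) h
    simpa [comp_assoc] using this)
  have h2 := Filter.tendsto_neg_atBot_atTop.eventually h
  filter_upwards [h2] with y hy
  simpa [comp_neg_X_leadingCoeff_eq] using hy

lemma prem {A : Type*} [CommRing A] (q : A[X]) (m : ℕ) (hm : 0 < m) (hq : q.natDegree ≤ m) :
    ∀ (n : ℕ) (p : A[X]), p.natDegree < n →
      ∃ (k : ℕ) (s r : A[X]), C (q.coeff m) ^ k * p = s * q + r ∧ r.natDegree < m := by
  intro n
  induction n with
  | zero => intro p hp; omega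
  | succ n ih =>
    intro p hp
    by_cases h : p.natDegree < m
    · exact ⟨0, 0, p, by simp, h⟩
    push Not at h
    set p1 := C (q.coeff m) * p - C p.leadingCoeff * X ^ (p.natDegree - m) * q with hp1
    have hdeg : p1.natDegree < p.natDegree := by
      suffices p1.natDegree ≤ p.natDegree - 1 by omega
      rw [natDegree_le_iff_coeff_eq_zero]
      intro N hN
      rw [hp1, coeff_sub, mul_assoc, coeff_C_mul, coeff_C_mul, coeff_X_pow_mul', if_pos (by omega)]
      rcases (show p.natDegree ≤ N by omega).eq_or_lt with rfl | hlt
      · rw [show p.natDegree - (p.natDegree - m) = m by omega, coeff_natDegree]; ring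
      · rw [coeff_eq_zero_of_natDegree_lt hlt,
          coeff_eq_zero_of_natDegree_lt
            (show q.natDegree < N - (p.natDegree - m) by omega)]; ring
    obtain ⟨k, s, r, h1, h2⟩ := ih p1 (by omega)
    refine ⟨k + 1, s + C (q.coeff m) ^ k * (C p.leadingCoeff * X ^ (p.natDegree - m)), r, ?_, h2⟩
    have : C (q.coeff m) * p = p1 + C p.leadingCoeff * X ^ (p.natDegree - m) * q := by
      rw [hp1]; ring
    rw [pow_succ, mul_assoc, this, mul_add, h1]
    ring

lemma rem_ex {A : Type*} [CommRing A] (p q : A[X]) (m d : ℕ) (hm : q.natDegree ≤ m) (hmd : m ≤ d)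
    (hd : 0 < d) : ∃ r : A[X], r.natDegree < d ∧ ∀ φ : A →+* ℝ, φ (q.coeff m) ≠ 0 → ∀ y : ℝ,
      eval₂ φ y q = 0 → SignType.sign (eval₂ φ y p) = SignType.sign (eval₂ φ y r) := by
  rcases Nat.eq_zero_or_pos m with rfl | h0
  · refine ⟨0, by simpa using hd, fun φ h y hy => ?_⟩
    rw [eq_C_of_natDegree_le_zero hm, eval₂_C] at hy
    exact absurd hy h
  obtain ⟨k, s, r, h1, h2⟩ := prem q m h0 hm _ p (Nat.lt_succ_self _)
  refine ⟨C (q.coeff m ^ k) * r, (natDegree_C_mul_le _ _).trans_lt (h2.trans_le hmd),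
    fun φ h y hy => ?_⟩
  have h3 := congrArg (eval₂ φ y) h1
  simp only [eval₂_mul, eval₂_add, hy, eval₂_pow, eval₂_C, mul_zero, zero_add] at h3
  have hpos : 0 < φ (q.coeff m) ^ k * φ (q.coeff m) ^ k := mul_self_pos.2 (pow_ne_zero _ h)
  rw [eval₂_mul, eval₂_C, ← h3, map_pow, ← mul_assoc, sign_mul, sign_pos hpos, one_mul]

theorem key_iso {A : Type*} [CommRing A] (F : Multiset A[X]) :
    ∃ K : Set A, K.Finite ∧ ∀ φ φ' : A →+* ℝ,
      (∀ c ∈ K, SignType.sign (φ c) = SignType.sign (φ' c)) →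
      ∃ θ : ℝ ≃o ℝ, ∀ p ∈ F, ∀ y,
        SignType.sign (eval₂ φ y p) = SignType.sign (eval₂ φ' (θ y) p) := by
  classical
  induction F using (InvImage.wf (Multiset.map (natDegree (R := A)))
    (Multiset.wellFounded_isDershowitzMannaLT (α := ℕ))).induction with
  | _ F ih =>
  by_cases hconst : ∃ q ∈ F, q.natDegree = 0
  · obtain ⟨q, hq, hq0⟩ := hconst
    obtain ⟨F', rfl⟩ := Multiset.exists_cons_of_mem hq
    obtain ⟨K, hK, h⟩ := ih F' ⟨F'.map natDegree, 0, {q.natDegree}, by simp, by simp,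
      by rw [Multiset.map_cons, ← Multiset.singleton_add, add_comm], by simp⟩
    refine ⟨insert (q.coeff 0) K, hK.insert _, fun φ φ' hag => ?_⟩
    obtain ⟨θ, hθ⟩ := h φ φ' fun c hc => hag c (Set.mem_insert_of_mem _ hc)
    refine ⟨θ, fun p hp y => ?_⟩
    rcases Multiset.mem_cons.1 hp with rfl | hp
    · rw [eq_C_of_natDegree_eq_zero hq0, eval₂_C, eval₂_C]
      exact hag _ (Set.mem_insert _ _)
    · exact hθ p hp y
  push Not at hconst
  by_cases hF : F = 0
  · subst hF
    exact ⟨∅, Set.finite_empty, fun _ _ _ => ⟨OrderIso.refl ℝ, by simp⟩⟩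
  obtain ⟨p, hp, hpmax⟩ : ∃ p ∈ F, ∀ q ∈ F, q.natDegree ≤ p.natDegree := by
    obtain ⟨p, hp, h⟩ := Finset.exists_max_image F.toFinset natDegree
      (by simpa [Finset.nonempty_iff_ne_empty] using hF)
    exact ⟨p, by simpa using hp, fun q hq => h q (by simpa using hq)⟩
  have hd : 0 < p.natDegree := Nat.pos_of_ne_zero (hconst p hp)
  -- degenerate leading coefficients
  have hE : ∀ q : A[X], ∃ K : Set A, K.Finite ∧ (q ∈ F → ∀ φ φ' : A →+* ℝ,
      (∀ c ∈ K, SignType.sign (φ c) = SignType.sign (φ' c)) →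
      ∃ θ : ℝ ≃o ℝ, ∀ p ∈ q.eraseLead ::ₘ F.erase q, ∀ y,
        SignType.sign (eval₂ φ y p) = SignType.sign (eval₂ φ' (θ y) p)) := by
    intro q
    by_cases hq : q ∈ F
    · obtain ⟨K, hK, h⟩ := ih (q.eraseLead ::ₘ F.erase q)
        ⟨(F.erase q).map natDegree, {q.eraseLead.natDegree}, {q.natDegree}, by simp,
          by rw [Multiset.map_cons, ← Multiset.singleton_add, add_comm],
          by conv_lhs => rw [← Multiset.cons_erase hq]
             rw [Multiset.map_cons, ← Multiset.singleton_add, add_comm],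
          by
            have := q.eraseLead_natDegree_le
            have := hconst q hq
            simp; omega⟩
      exact ⟨K, hK, fun _ => h⟩
    · exact ⟨∅, Set.finite_empty, fun h => absurd h hq⟩
  choose KE hKE hE using hE
  -- remainders
  have hR : ∀ q : A[X], ∃ r : A[X], r.natDegree < p.natDegree ∧ (q ∈ F → ∀ φ : A →+* ℝ,
      φ q.leadingCoeff ≠ 0 → ∀ y : ℝ,
      eval₂ φ y q = 0 → SignType.sign (eval₂ φ y p) = SignType.sign (eval₂ φ y r)) := by
    intro q
    by_cases hq : q ∈ F
    · obtain ⟨r, h1, h2⟩ := rem_ex p q _ _ le_rfl (hpmax q hq) hd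
      exact ⟨r, h1, fun _ => h2⟩
    · exact ⟨0, by simpa using hd, fun h => absurd h hq⟩
  choose R hRd hR using hR
  have hder : p.derivative.natDegree ≤ p.natDegree - 1 := natDegree_derivative_le p
  obtain ⟨r, hrd, hr⟩ := rem_ex p p.derivative (p.natDegree - 1) p.natDegree hder (by omega) hd
  obtain ⟨F', rfl⟩ := Multiset.exists_cons_of_mem hp
  obtain ⟨K, hK, h⟩ := ih (F' + (p.derivative ::ₘ r ::ₘ F'.map R))
    ⟨F'.map natDegree, (p.derivative ::ₘ r ::ₘ F'.map R).map natDegree, {p.natDegree}, by simp,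
      by simp, by rw [Multiset.map_cons, ← Multiset.singleton_add, add_comm], by
        intro y hy
        refine ⟨p.natDegree, by simp, ?_⟩
        simp only [Multiset.map_cons, Multiset.mem_cons, Multiset.mem_map] at hy
        rcases hy with rfl | rfl | ⟨_, ⟨q, hq, rfl⟩, rfl⟩
        · omega
        · exact hrd
        · exact hRd q⟩
  refine ⟨(⋃ q ∈ (p ::ₘ F').toFinset, KE q) ∪
    (leadingCoeff '' ((p ::ₘ F').toFinset : Set A[X]) ∪ K), ?_, fun φ φ' hag => ?_⟩
  · refine Set.Finite.union ?_ (Set.Finite.union ((Finset.finite_toSet _).image _) hK)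
    exact Set.Finite.biUnion (Finset.finite_toSet _) fun q _ => hKE q
  have hlc : ∀ q ∈ p ::ₘ F', SignType.sign (φ q.leadingCoeff) = SignType.sign (φ' q.leadingCoeff) :=
    fun q hq => hag _ (Or.inr (Or.inl ⟨q, by simpa using hq, rfl⟩))
  by_cases hdeg : ∃ q ∈ p ::ₘ F', φ q.leadingCoeff = 0
  · obtain ⟨q, hq, hq0⟩ := hdeg
    have hq0' : φ' q.leadingCoeff = 0 := by
      rw [← sign_eq_zero_iff, ← hlc q hq, hq0, sign_zero]
    obtain ⟨θ, hθ⟩ := hE q hq φ φ' fun c hc => hag c (Or.inl (by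
      simp only [Set.mem_iUnion]; exact ⟨q, by simpa using hq, hc⟩))
    have hev : ∀ (ψ : A →+* ℝ), ψ q.leadingCoeff = 0 → ∀ y, eval₂ ψ y q = eval₂ ψ y q.eraseLead := by
      intro ψ hψ y
      have h1 := congrArg (eval₂ ψ y) q.eraseLead_add_C_mul_X_pow
      rw [eval₂_add, eval₂_mul, eval₂_C, hψ, zero_mul, add_zero] at h1
      exact h1.symm
    refine ⟨θ, fun s hs y => ?_⟩
    rw [← Multiset.cons_erase hq] at hs
    rcases Multiset.mem_cons.1 hs with rfl | hs
    · rw [hev φ hq0, hev φ' hq0']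
      exact hθ _ (Multiset.mem_cons_self _ _) y
    · exact hθ _ (Multiset.mem_cons_of_mem hs) y
  push Not at hdeg
  have hdeg' : ∀ q ∈ p ::ₘ F', φ' q.leadingCoeff ≠ 0 := by
    intro q hq h0
    apply hdeg q hq
    rw [← sign_eq_zero_iff, hlc q hq, h0, sign_zero]
  obtain ⟨θ, hθ⟩ := h φ φ' fun c hc => hag c (Or.inr (Or.inr hc))
  have hpm := Multiset.mem_cons_self p F'
  have hdc : ∀ ψ : A →+* ℝ, ψ p.leadingCoeff ≠ 0 → ψ (p.derivative.coeff (p.natDegree - 1)) ≠ 0 := by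
    intro ψ hψ
    rw [coeff_derivative, show p.natDegree - 1 + 1 = p.natDegree by omega, coeff_natDegree, map_mul]
    refine mul_ne_zero hψ ?_
    have : ((p.natDegree - 1 : ℕ) : ℝ) + 1 ≠ 0 := by positivity
    simpa using this
  have n1 := natDegree_map_of_leadingCoeff_ne_zero φ (hdeg p hpm)
  have n2 := natDegree_map_of_leadingCoeff_ne_zero φ' (hdeg' p hpm)
  have l1 := leadingCoeff_map_of_leadingCoeff_ne_zero φ (hdeg p hpm)
  have l2 := leadingCoeff_map_of_leadingCoeff_ne_zero φ' (hdeg' p hpm)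
  have nz : ∀ (ψ : A →+* ℝ) (q : A[X]) (k : ℕ), ψ (q.coeff k) ≠ 0 → q.map ψ ≠ 0 := by
    intro ψ q k hk h0
    apply hk
    rw [← coeff_map, h0, coeff_zero]
  obtain ⟨θ', t1, t2⟩ := extend_iso
    ((fun q : A[X] => (q.map φ, q.map φ')) '' ((p.derivative ::ₘ F').toFinset : Set A[X]))
    ((Finset.finite_toSet _).image _)
    (by
      rintro _ ⟨q, hq, rfl⟩
      simp only [Finset.mem_coe, Multiset.mem_toFinset, Multiset.mem_cons] at hq
      rcases hq with rfl | hq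
      · exact nz _ _ _ (hdc φ (hdeg p hpm))
      · exact nz _ _ _ (hdeg q (Multiset.mem_cons_of_mem hq)))
    (p.map φ) (p.map φ')
    ⟨p.derivative, by simp, by simp [derivative_map]⟩ θ
    (by
      rintro _ ⟨q, hq, rfl⟩ y
      simp only [Finset.mem_coe, Multiset.mem_toFinset, Multiset.mem_cons] at hq
      simp only [eval_map]
      apply hθ
      rcases hq with rfl | hq <;> simp [*])
    (by
      rintro _ ⟨q, hq, rfl⟩ y hy
      simp only [Finset.mem_coe, Multiset.mem_toFinset, Multiset.mem_cons] at hq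
      simp only [eval_map] at hy ⊢
      have hy' : eval₂ φ' (θ y) q = 0 := by
        rw [← sign_eq_zero_iff, ← hθ q (by rcases hq with rfl | hq <;> simp [*]), hy, sign_zero]
      rcases hq with rfl | hq
      · rw [hr φ (hdc φ (hdeg p hpm)) y hy, hr φ' (hdc φ' (hdeg' p hpm)) _ hy']
        exact hθ _ (by simp) _
      · have hq' := Multiset.mem_cons_of_mem (b := p) hq
        rw [hR q hq' φ (hdeg q hq') y hy, hR q hq' φ' (hdeg' q hq') _ hy']
        refine hθ _ ?_ _
        have : R q ∈ F'.map R := Multiset.mem_map_of_mem _ hq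
        simp [this])
    (by
      have e1 := sign_top _ (nz φ p _ (hdeg p hpm))
      have e2 := θ.tendsto_atTop.eventually (sign_top _ (nz φ' p _ (hdeg' p hpm)))
      filter_upwards [e1, e2] with y h1 h2
      rw [h1, h2, l1, l2, hlc p hpm])
    (by
      have e1 := sign_bot _ (nz φ p _ (hdeg p hpm))
      have e2 := θ.tendsto_atBot.eventually (sign_bot _ (nz φ' p _ (hdeg' p hpm)))
      filter_upwards [e1, e2] with y h1 h2
      rw [h1, h2, l1, l2, n1, n2, sign_mul, sign_mul, hlc p hpm])
  refine ⟨θ', fun q hq y => ?_⟩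
  rcases Multiset.mem_cons.1 hq with rfl | hq
  · simpa only [eval_map] using t2 y
  · simpa only [eval_map] using t1 _ ⟨q, by simp [hq], rfl⟩ y

theorem tarski (n : ℕ) : ∀ {A : Type} [CommRing A] (F : Set (MvPolynomial (Fin n) A)), F.Finite →
    ∃ K : Set A, K.Finite ∧ ∀ φ φ' : A →+* ℝ,
      (∀ c ∈ K, SignType.sign (φ c) = SignType.sign (φ' c)) →
      ∀ x : Fin n → ℝ, ∃ x' : Fin n → ℝ, ∀ p ∈ F,
        SignType.sign (MvPolynomial.eval₂ φ x p) = SignType.sign (MvPolynomial.eval₂ φ' x' p) := by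
  induction n with
  | zero =>
    intro A _ F hF
    refine ⟨MvPolynomial.constantCoeff '' F, hF.image _, fun φ φ' hag x => ⟨x, fun p hp => ?_⟩⟩
    rw [MvPolynomial.eq_C_of_isEmpty p, MvPolynomial.eval₂_C, MvPolynomial.eval₂_C]
    exact hag _ ⟨p, hp, rfl⟩
  | succ n ih =>
    intro A _ F hF
    obtain ⟨K, hK, h⟩ := key_iso (A := MvPolynomial (Fin n) A)
      (hF.toFinset.val.map (MvPolynomial.finSuccEquiv A n))
    obtain ⟨K', hK', h'⟩ := ih K hK
    refine ⟨K', hK', fun φ φ' hag x => ?_⟩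
    obtain ⟨x', hx'⟩ := h' φ φ' hag (Fin.tail x)
    obtain ⟨θ, hθ⟩ := h (MvPolynomial.eval₂Hom φ (Fin.tail x)) (MvPolynomial.eval₂Hom φ' x') hx'
    refine ⟨Fin.cons (θ (x 0)) x', fun p hp => ?_⟩
    have key : ∀ (p : MvPolynomial (Fin (n + 1)) A) (ψ : A →+* ℝ) (z : Fin n → ℝ) (y : ℝ),
      MvPolynomial.eval₂ ψ (Fin.cons y z : Fin (n + 1) → ℝ) p =
        eval₂ (MvPolynomial.eval₂Hom ψ z) y (MvPolynomial.finSuccEquiv A n p) := by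
      intro p ψ z y
      induction p using MvPolynomial.induction_on with
      | C a => simp [MvPolynomial.finSuccEquiv_apply]
      | add p q hp hq => rw [MvPolynomial.eval₂_add, hp, hq, map_add, eval₂_add]
      | mul_X p i hp =>
        rw [MvPolynomial.eval₂_mul, hp, map_mul, eval₂_mul, MvPolynomial.eval₂_X]
        congr 1
        refine Fin.cases ?_ (fun j => ?_) i
        · simp [MvPolynomial.finSuccEquiv_X_zero]
        · simp [MvPolynomial.finSuccEquiv_X_succ]
    rw [key, ← hθ _ (Multiset.mem_map_of_mem _ (by simpa using hp)), ← key]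
    congr 1
    simp [Fin.cons_self_tail]

/-- The basic closed sets of the statement. -/
def BasicClosed (B : Set ℝ) : Prop :=
  ∃ (v k : ℕ) (g : Fin v → ℝ[X]) (h : Fin k → ℝ[X]),
    B = {t : ℝ | (∀ i, 0 ≤ (g i).eval t) ∧ ∀ i, (h i).eval t = 0} ∧
    (∀ i, HasOnlySimpleComplexRoots (g i)) ∧
    ∀ i i', i ≠ i' → ¬ HasCommonComplexRoot (g i) (g i')

lemma simple_of_natDegree (p : ℝ[X]) (hp : p.natDegree = 1) : HasOnlySimpleComplexRoots p := by
  have h0 : p ≠ 0 := by rintro rfl; simp at hp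
  refine ⟨h0, fun a => ?_⟩
  have h1 : p.map (algebraMap ℝ ℂ) ≠ 0 := by simpa using h0
  classical
  rw [← count_roots]
  refine (Multiset.count_le_card _ _).trans ((card_roots' _).trans ?_)
  rw [natDegree_map, hp]

lemma simple_lo (a : ℝ) : HasOnlySimpleComplexRoots (X - C a) :=
  simple_of_natDegree _ (natDegree_X_sub_C a)

lemma simple_hi (a : ℝ) : HasOnlySimpleComplexRoots (C a - X) :=
  simple_of_natDegree _ (by rw [← neg_sub, natDegree_neg, natDegree_X_sub_C])

lemma basic_empty : BasicClosed ∅ :=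
  ⟨0, 1, ![], ![1], by ext; simp, fun i => i.elim0, fun i => i.elim0⟩

lemma basic_univ : BasicClosed Set.univ :=
  ⟨0, 0, ![], ![], by ext; simp, fun i => i.elim0, fun i => i.elim0⟩

lemma basic_Ici (a : ℝ) : BasicClosed (Set.Ici a) :=
  ⟨1, 0, ![X - C a], ![], by ext; simp, by simp [simple_lo], fun i j h => absurd (Subsingleton.elim i j) h⟩

lemma basic_Iic (a : ℝ) : BasicClosed (Set.Iic a) :=
  ⟨1, 0, ![C a - X], ![], by ext; simp, by simp [simple_hi], fun i j h => absurd (Subsingleton.elim i j) h⟩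

lemma basic_Icc (a b : ℝ) : BasicClosed (Set.Icc a b) := by
  rcases lt_trichotomy a b with h | h | h
  · have hne : ∀ z : ℂ, z - (a : ℂ) = 0 → (b : ℂ) - z = 0 → False := by
      intro z h1 h2
      have : (a : ℂ) = b := by linear_combination -h1 - h2
      exact h.ne (by exact_mod_cast this)
    refine ⟨2, 0, ![X - C a, C b - X], ![], by ext; simp [Fin.forall_fin_two], ?_, ?_⟩
    · simp [Fin.forall_fin_two, simple_lo, simple_hi]
    · rintro i j hij ⟨z, h1, h2⟩
      fin_cases i <;> fin_cases j <;> simp at hij h1 h2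
      · exact hne z h1 h2
      · exact hne z h2 h1
  · subst h
    refine ⟨0, 1, ![], ![X - C a], ?_, fun i => i.elim0, fun i => i.elim0⟩
    ext t; simp [sub_eq_zero]
  · rw [Set.Icc_eq_empty (not_le.2 h)]; exact basic_empty

lemma basic_closure (s : Set ℝ) (hs : s.OrdConnected) : BasicClosed (closure s) := by
  have hm := hs.isPreconnected.mem_intervals
  generalize sInf s = a at hm
  generalize sSup s = b at hm
  have ee : ∀ t : Set ℝ, (t = Set.Ico a b ∨ t = Set.Ioc a b ∨ t = Set.Ioo a b) →
      BasicClosed (closure t) := by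
    intro t ht
    by_cases hab : a < b
    · rcases ht with rfl | rfl | rfl
      · rw [closure_Ico hab.ne]; exact basic_Icc a b
      · rw [closure_Ioc hab.ne]; exact basic_Icc a b
      · rw [closure_Ioo hab.ne]; exact basic_Icc a b
    · have : t = ∅ := by
        rcases ht with rfl | rfl | rfl
        · exact Set.Ico_eq_empty hab
        · exact Set.Ioc_eq_empty hab
        · exact Set.Ioo_eq_empty hab
      rw [this, closure_empty]; exact basic_empty
  simp only [Set.mem_insert_iff, Set.mem_singleton_iff] at hm
  rcases hm with h | h | h | h | h | h | h | h | h | h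
  · rw [h, closure_Icc]; exact basic_Icc a b
  · exact ee _ (Or.inl h)
  · exact ee _ (Or.inr (Or.inl h))
  · exact ee _ (Or.inr (Or.inr h))
  · rw [h, closure_Ici]; exact basic_Ici a
  · rw [h, closure_Ioi]; exact basic_Ici a
  · rw [h, closure_Iic]; exact basic_Iic b
  · rw [h, closure_Iio]; exact basic_Iic b
  · rw [h, closure_univ]; exact basic_univ
  · rw [h, closure_empty]; exact basic_empty

/-- A set saturated for finitely many polynomial signs has closure a finite union of
basic closed sets. -/
lemma closure_saturated (E : Set ℝ) (K : Set ℝ[X]) (hK : K.Finite)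
    (hE : ∀ t t' : ℝ, (∀ c ∈ K, SignType.sign (c.eval t) = SignType.sign (c.eval t')) →
      t ∈ E → t' ∈ E) :
    ∃ (w : ℕ) (B : Fin w → Set ℝ), closure E = ⋃ j, B j ∧ ∀ j, BasicClosed (B j) := by
  classical
  set Z : Finset ℝ := hK.toFinset.biUnion fun q => q.roots.toFinset with hZ
  have hsame : ∀ t t' : ℝ, (∀ z : Z, SignType.sign (t - z) = SignType.sign (t' - z)) →
      t ∈ E → t' ∈ E := by
    intro t t' h
    by_cases htt : t = t'
    · rw [htt]; exact id
    apply hE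
    intro c hc
    by_cases h0 : c = 0
    · simp [h0]
    apply sign_const
    intro z hz hz0
    have hzZ : z ∈ Z := by
      rw [hZ, Finset.mem_biUnion]
      exact ⟨c, by simpa using hc, by simp [h0, hz0]⟩
    have hsz := h ⟨z, hzZ⟩
    dsimp only at hsz
    rcases lt_trichotomy t z with h1 | h1 | h1
    · have : t' < z := by
        rwa [sign_neg (sub_neg.2 h1), eq_comm, sign_eq_neg_one_iff, sub_neg] at hsz
      rcases Set.mem_uIcc.1 hz with h | h <;> linarith [h.1, h.2]
    · apply htt
      rw [h1, sub_self, sign_zero, eq_comm, sign_eq_zero_iff] at hsz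
      linarith
    · have : z < t' := by
        rwa [sign_pos (sub_pos.2 h1), eq_comm, sign_eq_one_iff, sub_pos] at hsz
      rcases Set.mem_uIcc.1 hz with h | h <;> linarith [h.1, h.2]
  let fib : (Z → SignType) → Set ℝ := fun s => {t | t ∈ E ∧ ∀ z : Z, SignType.sign (t - z) = s z}
  have hfib : E = ⋃ s, fib s := by
    ext t
    simp only [Set.mem_iUnion]
    exact ⟨fun h => ⟨fun z => SignType.sign (t - z), h, fun _ => rfl⟩, fun ⟨s, h⟩ => h.1⟩
  have hoc : ∀ s, (fib s).OrdConnected := by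
    intro s
    refine ⟨fun x hx y hy t ht => ?_⟩
    have hs : ∀ z : Z, SignType.sign (t - z) = s z := by
      intro z
      apply le_antisymm
      · rw [← hy.2 z]
        exact SignType.sign.monotone (by linarith [ht.2])
      · rw [← hx.2 z]
        exact SignType.sign.monotone (by linarith [ht.1])
    exact ⟨hsame x t (fun z => by rw [hx.2 z, hs z]) hx.1, hs⟩
  let e := Fintype.equivFin (Z → SignType)
  refine ⟨_, fun j => closure (fib (e.symm j)), ?_, fun j => basic_closure _ (hoc _)⟩
  conv_lhs => rw [hfib]
  rw [closure_iUnion_of_finite]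
  exact (e.symm.surjective.iUnion_comp fun s => closure (fib s)).symm

/-- For a polynomial `f` on `ℝⁿ` and a semi-algebraic set `S ⊆ ℝⁿ`
(a finite union of elementary semi-algebraic sets), the closure of the image `f(S)`
is a finite union of sets `{t : g_{1,j}(t) ≥ 0, …, g_{v_j,j}(t) ≥ 0,
h_{1,j}(t) = ⋯ = h_{k_j,j}(t) = 0}` where each `g_{i,j}` is squarefree and, for each
`j`, no two distinct `g_{i,j}` have a common complex root. -/
theorem closure_image_semialgebraic
    (n N : ℕ) (f : MvPolynomial (Fin n) ℝ)
    (mP lQ : Fin N → ℕ)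
    (P : (u : Fin N) → Fin (mP u) → MvPolynomial (Fin n) ℝ)
    (Q : (u : Fin N) → Fin (lQ u) → MvPolynomial (Fin n) ℝ)
    (S : Set (Fin n → ℝ))
    (hS : S = ⋃ u, {x | (∀ i, 0 < MvPolynomial.eval x (P u i)) ∧
        ∀ k, MvPolynomial.eval x (Q u k) = 0}) :
    ∃ (w : ℕ) (v kk : Fin w → ℕ)
      (g : (j : Fin w) → Fin (v j) → Polynomial ℝ)
      (h : (j : Fin w) → Fin (kk j) → Polynomial ℝ),
      (closure ((fun x => MvPolynomial.eval x f) '' S)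
        = ⋃ j, {t : ℝ | (∀ i, 0 ≤ (g j i).eval t) ∧ ∀ i, (h j i).eval t = 0}) ∧
      (∀ j i, HasOnlySimpleComplexRoots (g j i)) ∧
      ∀ j, ∀ i i', i ≠ i' → ¬ HasCommonComplexRoot (g j i) (g j i') := by
  classical
  -- polynomials with coefficients in `ℝ[X]`, the variable of `ℝ[X]` being the value `t`
  let F : Set (MvPolynomial (Fin n) ℝ[X]) :=
    {MvPolynomial.map Polynomial.C f - MvPolynomial.C X} ∪
      ((Set.range fun s : Σ u, Fin (mP u) => MvPolynomial.map Polynomial.C (P s.1 s.2)) ∪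
       (Set.range fun s : Σ u, Fin (lQ u) => MvPolynomial.map Polynomial.C (Q s.1 s.2)))
  have hF : F.Finite := (Set.finite_singleton _).union ((Set.finite_range _).union
    (Set.finite_range _))
  obtain ⟨K, hK, hT⟩ := tarski n F hF
  have hmap : ∀ (t : ℝ) (x : Fin n → ℝ) (p : MvPolynomial (Fin n) ℝ),
      MvPolynomial.eval₂ (Polynomial.evalRingHom t) x (MvPolynomial.map Polynomial.C p) =
        MvPolynomial.eval x p := by
    intro t x p
    rw [MvPolynomial.eval₂_map]
    have : (Polynomial.evalRingHom t).comp (Polynomial.C : ℝ →+* ℝ[X]) = RingHom.id ℝ := by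
      ext; simp
    rw [this]
    rfl
  have hsat : ∀ t t' : ℝ, (∀ c ∈ K, SignType.sign (c.eval t) = SignType.sign (c.eval t')) →
      t ∈ (fun x => MvPolynomial.eval x f) '' S → t' ∈ (fun x => MvPolynomial.eval x f) '' S := by
    rintro t t' hag ⟨x, hx, hxt⟩
    obtain ⟨x', hx'⟩ := hT (Polynomial.evalRingHom t) (Polynomial.evalRingHom t') hag x
    refine ⟨x', ?_, ?_⟩
    · rw [hS, Set.mem_iUnion] at hx ⊢
      obtain ⟨u, h1, h2⟩ := hx
      refine ⟨u, fun i => ?_, fun k => ?_⟩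
      · have := hx' _ (Or.inr (Or.inl ⟨⟨u, i⟩, rfl⟩))
        rw [hmap, hmap] at this
        rw [← sign_eq_one_iff, ← this, sign_eq_one_iff]
        exact h1 i
      · have := hx' _ (Or.inr (Or.inr ⟨⟨u, k⟩, rfl⟩))
        rw [hmap, hmap] at this
        rw [← sign_eq_zero_iff, ← this, sign_eq_zero_iff]
        exact h2 k
    · have := hx' _ (Or.inl rfl)
      rw [MvPolynomial.eval₂_sub, MvPolynomial.eval₂_sub, hmap, hmap, MvPolynomial.eval₂_C,
        MvPolynomial.eval₂_C] at this
      simp only [coe_evalRingHom, eval_X] at this hxt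
      rw [hxt, sub_self, sign_zero, eq_comm, sign_eq_zero_iff] at this
      exact sub_eq_zero.1 this
  obtain ⟨w, B, hB, hb⟩ := closure_saturated _ K hK hsat
  choose v kk g h e1 e2 e3 using hb
  refine ⟨w, v, kk, g, h, ?_, e2, e3⟩
  rw [hB]
  exact Set.iUnion_congr e1
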